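/- arXiv:1804.08172 — 6 statements merged into one kernel-verified Lean document; each statement's English description precedes it below -/
import Mathlib

section
/- Let f : ℝ^d≥0 → ℝ be differentiable, convex, and supermodular. Then for all x, x', y ∈ ℝ^d≥0 with x' ≤ x componentwise, f(x' + y) − f(x') ≤ f(x + y) − f(x). In particular, if f(0) = 0 then f is superadditive: f(x) + f(y) ≤ f(x + y) for all x, y ∈ ℝ^d≥0. -/
/-!
Write `D y x = f (x + y) - f x` for `0 ≤ y`; the claim is that `D y` is monotone on the orthant.
If `D u` and `D v` are monotone, so is `D (u + v)`, because `D (u + v) x = D u x + D v (x + u)`.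
Decomposing `y` into its coordinates, it is enough to treat `y = t eᵢ` (`increment_single_mono`).

For `x' ≤ x`, let `z` be `x` with its `i`-th coordinate replaced by that of `x'`. The points
`x' + t eᵢ` and `z` have meet `x'` and join `z + t eᵢ`, so supermodularity gives
`D (t eᵢ) x' ≤ D (t eᵢ) z`. As `x = z + s eᵢ` with `s ≥ 0`, convexity along the line through `z` in
direction `eᵢ` gives `D (t eᵢ) z ≤ D (t eᵢ) x` (`convex_increment_le`).
Superadditivity is the case `x' = 0`.
-/

/-- Increments of a convex function along a ray are monotone: both middle points are convex
combinations of `z` and `z + (s + t) • e`, with complementary weights. -/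
lemma convex_increment_le {E : Type*} [AddCommGroup E] [Module ℝ E] {S : Set E} {f : E → ℝ}
    (hf : ConvexOn ℝ S f) {z e : E} {s t : ℝ} (hs : 0 ≤ s) (ht : 0 ≤ t)
    (hz : z ∈ S) (hw : z + (s + t) • e ∈ S) :
    f (z + t • e) + f (z + s • e) ≤ f z + f (z + (s + t) • e) := by
  rcases (add_nonneg hs ht).eq_or_lt with h | h
  · have hs0 : s = 0 := by linarith
    have ht0 : t = 0 := by linarith
    simp [hs0, ht0]
  · have hne : s + t ≠ 0 := h.ne'
    have hsum : s / (s + t) + t / (s + t) = 1 := by field_simp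
    have hsum' : t / (s + t) + s / (s + t) = 1 := by field_simp; ring
    have h1 := hf.2 hz hw (div_nonneg hs h.le) (div_nonneg ht h.le) hsum
    have h2 := hf.2 hz hw (div_nonneg ht h.le) (div_nonneg hs h.le) hsum'
    have e1 : (s / (s + t)) • z + (t / (s + t)) • (z + (s + t) • e) = z + t • e := by
      rw [smul_add, ← add_assoc, ← add_smul, hsum, one_smul, smul_smul, div_mul_cancel₀ _ hne]
    have e2 : (t / (s + t)) • z + (s / (s + t)) • (z + (s + t) • e) = z + s • e := by
      rw [smul_add, ← add_assoc, ← add_smul, hsum', one_smul, smul_smul, div_mul_cancel₀ _ hne]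
    rw [e1] at h1
    rw [e2] at h2
    simp only [smul_eq_mul] at h1 h2
    linear_combination h1 + h2 + (f z + f (z + (s + t) • e)) * hsum

/-- The case of the theorem in which the increment is in a single coordinate direction. -/
lemma increment_single_mono {d : ℕ} {f : (Fin d → ℝ) → ℝ}
    (hconv : ConvexOn ℝ {x : Fin d → ℝ | 0 ≤ x} f)
    (hsup : ∀ x y : Fin d → ℝ, 0 ≤ x → 0 ≤ y → f x + f y ≤ f (x ⊓ y) + f (x ⊔ y))
    {x x' : Fin d → ℝ} (hx' : 0 ≤ x') (hxx : x' ≤ x) (i : Fin d) {t : ℝ} (ht : 0 ≤ t) :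
    f (x' + Pi.single i t) - f x' ≤ f (x + Pi.single i t) - f x := by
  have hsingle : ∀ r : ℝ, (Pi.single i r : Fin d → ℝ) = r • Pi.single i (1 : ℝ) := by
    intro r
    rw [← Pi.single_smul, smul_eq_mul, mul_one]
  set z : Fin d → ℝ := Function.update x i (x' i) with hz
  have hxz : x' ≤ z := by
    intro j
    by_cases h : j = i
    · subst h; simp [hz]
    · simpa [hz, h] using hxx j
  have hz0 : 0 ≤ z := hx'.trans hxz
  have hs : 0 ≤ x i - x' i := sub_nonneg.2 (hxx i)
  have hx : x = z + (x i - x' i) • Pi.single i (1 : ℝ) := by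
    ext j
    by_cases h : j = i
    · subst h; simp [hz]
    · simp [hz, h]
  have hinf : (x' + Pi.single i t) ⊓ z = x' := by
    ext j
    by_cases h : j = i
    · subst h; simp [hz, ht]
    · simpa [hz, h] using hxx j
  have hsp : (x' + Pi.single i t) ⊔ z = z + Pi.single i t := by
    ext j
    by_cases h : j = i
    · subst h; simp [hz, ht]
    · simpa [hz, h] using hxx j
  have hsingle0 : (0 : Fin d → ℝ) ≤ Pi.single i t := Pi.single_nonneg.2 ht
  have h1 := hsup (x' + Pi.single i t) z (add_nonneg hx' hsingle0) hz0
  rw [hinf, hsp] at h1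
  have hxt : x + Pi.single i t = z + (x i - x' i + t) • Pi.single i (1 : ℝ) := by
    rw [add_smul, ← add_assoc, ← hx, ← hsingle]
  have hw : z + (x i - x' i + t) • Pi.single i (1 : ℝ) ∈ {x : Fin d → ℝ | 0 ≤ x} := by
    rw [← hxt]
    exact add_nonneg (hx'.trans hxx) hsingle0
  have h2 := convex_increment_le hconv hs ht hz0 hw
  rw [← hxt, ← hx, ← hsingle] at h2
  linarith

/-- A differentiable, convex, supermodular function on the nonnegative orthant satisfies
`f(x'+y) − f(x') ≤ f(x+y) − f(x)` whenever `x' ≤ x`; in particular, if `f 0 = 0` then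
`f` is superadditive. -/
theorem supermodular_superadditive {d : ℕ} (f : (Fin d → ℝ) → ℝ)
    (hdiff : Differentiable ℝ f)
    (hconv : ConvexOn ℝ {x : Fin d → ℝ | 0 ≤ x} f)
    (hsup : ∀ x y : Fin d → ℝ, 0 ≤ x → 0 ≤ y → f x + f y ≤ f (x ⊓ y) + f (x ⊔ y)) :
    (∀ x x' y : Fin d → ℝ, 0 ≤ x' → 0 ≤ y → x' ≤ x →
        f (x' + y) - f x' ≤ f (x + y) - f x) ∧
      (f 0 = 0 → ∀ x y : Fin d → ℝ, 0 ≤ x → 0 ≤ y → f x + f y ≤ f (x + y)) := by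
  have main : ∀ x x' y : Fin d → ℝ, 0 ≤ x' → 0 ≤ y → x' ≤ x →
      f (x' + y) - f x' ≤ f (x + y) - f x := by
    intro x x' y hx' hy hxx
    have key : ∀ s : Finset (Fin d),
        f (x' + ∑ i ∈ s, Pi.single i (y i)) - f x' ≤
          f (x + ∑ i ∈ s, Pi.single i (y i)) - f x := by
      intro s
      induction s using Finset.induction_on with
      | empty => simp
      | insert i s hi ih =>
        have hsum : (0 : Fin d → ℝ) ≤ ∑ i ∈ s, Pi.single i (y i) :=
          Finset.sum_nonneg fun j _ => Pi.single_nonneg.2 (hy j)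
        have h := increment_single_mono hconv hsup (add_nonneg hx' hsum)
          (add_le_add_left hxx (∑ i ∈ s, Pi.single i (y i))) i (hy i)
        rw [Finset.sum_insert hi, add_comm (Pi.single i (y i) : Fin d → ℝ), ← add_assoc, ← add_assoc]
        linarith
    have h := key Finset.univ
    rwa [Finset.univ_sum_single] at h
  refine ⟨main, fun h0 x y hx hy => ?_⟩
  have h := main x 0 y le_rfl hy hx
  rw [zero_add, h0] at h
  linarith
end

section
/- Suppose g : ℝ^d≥0 → ℝ is differentiable, convex, and supermodular with g(0) = 0. Then the profit function is subadditive: for all y, z ∈ ℝ^n≥0, π(y + z) ≤ π(y) + π(z). -/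
/-!
Since `x ↦ ∑ i, v i * x i` and `x ↦ S x` are additive and `S x ≥ 0` for `x ≥ 0`, the claim reduces
to superadditivity of `g` on the nonnegative orthant. The key fact is that `g` has increasing
differences along each coordinate direction (`increasing_differences`): for `0 ≤ w ≤ x`, the
increment of `g` in direction `i` at `w` is at most the increment at `x`. To see this, first raise
the `i`-th coordinate of `w` to `x i`, using convexity along the line, then raise the other
coordinates, using supermodularity. Building up `b` one coordinate at a time from `0` and from `a`
then gives `g b - g 0 ≤ g (a + b) - g a`.
-/

/-- The profit of a fractional solution `x`: total value minus the cost of the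
total occupied size. -/
noncomputable def profit {d n : ℕ} (v : Fin n → ℝ) (S : Matrix (Fin d) (Fin n) ℝ)
    (g : (Fin d → ℝ) → ℝ) (x : Fin n → ℝ) : ℝ :=
  (∑ i, v i * x i) - g (S.mulVec x)

/-- Convexity along a ray: the increment of `g` over a step `t` in direction `u` does not decrease
when the base point moves by `s` in the same direction. -/
lemma convex_increment {d : ℕ} {g : (Fin d → ℝ) → ℝ}
    (hconv : ConvexOn ℝ {z : Fin d → ℝ | 0 ≤ z} g) {w u : Fin d → ℝ} (hw : 0 ≤ w) (hu : 0 ≤ u)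
    {s t : ℝ} (hs : 0 ≤ s) (ht : 0 ≤ t) :
    g (w + t • u) + g (w + s • u) ≤ g w + g (w + (s + t) • u) := by
  rcases (add_nonneg hs ht).eq_or_lt with h | h
  · obtain rfl : s = 0 := by linarith
    obtain rfl : t = 0 := by linarith
    simp
  · have hne : s + t ≠ 0 := h.ne'
    have hend : w + (s + t) • u ∈ {z : Fin d → ℝ | 0 ≤ z} :=
      add_nonneg hw (smul_nonneg h.le hu)
    have hp : 0 ≤ s / (s + t) := by positivity
    have hq : 0 ≤ t / (s + t) := by positivity
    have hpq : s / (s + t) + t / (s + t) = 1 := by field_simp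
    -- Both intermediate points are convex combinations of the endpoints, with swapped weights.
    have h₁ := hconv.2 hw hend hp hq hpq
    have h₂ := hconv.2 hw hend hq hp (by rw [add_comm, hpq])
    have e₁ : (s / (s + t)) • w + (t / (s + t)) • (w + (s + t) • u) = w + t • u := by
      ext j
      simp only [Pi.add_apply, Pi.smul_apply, smul_eq_mul]
      field_simp
      ring
    have e₂ : (t / (s + t)) • w + (s / (s + t)) • (w + (s + t) • u) = w + s • u := by
      ext j
      simp only [Pi.add_apply, Pi.smul_apply, smul_eq_mul]
      field_simp
      ring
    rw [e₁] at h₁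
    rw [e₂] at h₂
    simp only [smul_eq_mul] at h₁ h₂
    have hsum : s / (s + t) * g w + t / (s + t) * g (w + (s + t) • u)
        + (t / (s + t) * g w + s / (s + t) * g (w + (s + t) • u))
        = (s / (s + t) + t / (s + t)) * (g w + g (w + (s + t) • u)) := by ring
    rw [hpq, one_mul] at hsum
    linarith

/-- A convex supermodular function has increasing differences along coordinate directions. -/
lemma increasing_differences {d : ℕ} {g : (Fin d → ℝ) → ℝ}
    (hconv : ConvexOn ℝ {z : Fin d → ℝ | 0 ≤ z} g)
    (hsup : ∀ x y : Fin d → ℝ, 0 ≤ x → 0 ≤ y → g x + g y ≤ g (x ⊓ y) + g (x ⊔ y))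
    {w x : Fin d → ℝ} (hw : 0 ≤ w) (hwx : w ≤ x) (i : Fin d) {t : ℝ} (ht : 0 ≤ t) :
    g (w + Pi.single i t) - g w ≤ g (x + Pi.single i t) - g x := by
  have hs : 0 ≤ x i - w i := sub_nonneg.2 (hwx i)
  have hu : (0 : Fin d → ℝ) ≤ Pi.single i 1 := Pi.single_nonneg.2 zero_le_one
  have hsingle : ∀ r : ℝ, r • (Pi.single i 1 : Fin d → ℝ) = Pi.single i r := fun r => by
    rw [← Pi.single_smul, smul_eq_mul, mul_one]
  have h₁ := convex_increment hconv hw hu hs ht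
  rw [hsingle, hsingle, hsingle] at h₁
  -- `w` with its `i`-th coordinate raised to `x i + t`; its meet with `x` has coordinate `x i`.
  have h₂ := hsup x (w + Pi.single i (x i - w i + t)) (hw.trans hwx)
    (add_nonneg hw (Pi.single_nonneg.2 (add_nonneg hs ht)))
  have e₁ : x ⊓ (w + Pi.single i (x i - w i + t)) = w + Pi.single i (x i - w i) := by
    ext j
    rcases eq_or_ne j i with rfl | hj
    · simp only [Pi.inf_apply, Pi.add_apply, Pi.single_eq_same]
      rw [inf_eq_left.2 (by linarith)]
      ring
    · simpa [hj] using hwx j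
  have e₂ : x ⊔ (w + Pi.single i (x i - w i + t)) = x + Pi.single i t := by
    ext j
    rcases eq_or_ne j i with rfl | hj
    · simp only [Pi.sup_apply, Pi.add_apply, Pi.single_eq_same]
      rw [sup_eq_right.2 (by linarith)]
      ring
    · simpa [hj] using hwx j
  rw [e₁, e₂] at h₂
  linarith

lemma superadditive_of_convex_supermodular {d : ℕ} {g : (Fin d → ℝ) → ℝ}
    (hconv : ConvexOn ℝ {z : Fin d → ℝ | 0 ≤ z} g)
    (hsup : ∀ x y : Fin d → ℝ, 0 ≤ x → 0 ≤ y → g x + g y ≤ g (x ⊓ y) + g (x ⊔ y))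
    (hg0 : g 0 = 0) {a b : Fin d → ℝ} (ha : 0 ≤ a) (hb : 0 ≤ b) :
    g a + g b ≤ g (a + b) := by
  -- Add the coordinates of `b` one at a time.
  have key : ∀ T : Finset (Fin d),
      g a + g (∑ i ∈ T, Pi.single i (b i)) ≤ g (a + ∑ i ∈ T, Pi.single i (b i)) := by
    intro T
    induction T using Finset.induction_on with
    | empty => simp [hg0]
    | insert i T hi ih =>
      rw [Finset.sum_insert hi, add_comm (Pi.single i (b i) : Fin d → ℝ), ← add_assoc]
      have hnonneg : 0 ≤ ∑ j ∈ T, (Pi.single j (b j) : Fin d → ℝ) :=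
        Finset.sum_nonneg fun j _ => Pi.single_nonneg.2 (hb j)
      have h := increasing_differences hconv hsup hnonneg (le_add_of_nonneg_left ha) i (hb i)
      linarith
  simpa only [Finset.univ_sum_single] using key Finset.univ

/-- If the cost `g` is differentiable, convex and supermodular with `g 0 = 0`, then the
profit function is subadditive. -/
theorem profit_subadditive {d n : ℕ} (g : (Fin d → ℝ) → ℝ)
    (hdiff : Differentiable ℝ g)
    (hconv : ConvexOn ℝ {z : Fin d → ℝ | 0 ≤ z} g)
    (hsup : ∀ x y : Fin d → ℝ, 0 ≤ x → 0 ≤ y → g x + g y ≤ g (x ⊓ y) + g (x ⊔ y))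
    (hg0 : g 0 = 0)
    (v : Fin n → ℝ) (hv : 0 ≤ v)
    (S : Matrix (Fin d) (Fin n) ℝ) (hS : ∀ i j, 0 ≤ S i j) :
    ∀ y z : Fin n → ℝ, 0 ≤ y → 0 ≤ z →
      profit v S g (y + z) ≤ profit v S g y + profit v S g z := by
  intro y z hy hz
  have hnonneg : ∀ x : Fin n → ℝ, 0 ≤ x → 0 ≤ S.mulVec x := fun x hx i => by
    simp only [Matrix.mulVec, dotProduct]
    exact Finset.sum_nonneg fun j _ => mul_nonneg (hS i j) (hx j)
  have h := superadditive_of_convex_supermodular hconv hsup hg0 (hnonneg y hy) (hnonneg z hz)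
  simp only [profit, Matrix.mulVec_add, Pi.add_apply, mul_add, Finset.sum_add_distrib]
  linarith
end

section
/- Let g : ℝ^d≥0 → ℝ be differentiable, convex, and supermodular, and let s_1, …, s_n ∈ ℝ^d≥0. Define h : {0,1}^n → ℝ by h(x) = g(∑_i s_i x_i) = g(Sx). Then h is discretely supermodular: for all x, y ∈ {0,1}^n, h(x) + h(y) ≤ h(x ∧ y) + h(x ∨ y), where ∧ and ∨ denote componentwise minimum and maximum. -/
/-!
Writing `a = S(x ⊓ y)`, `u = S(x - x ⊓ y)`, `v = S(y - x ⊓ y)`, the claim becomes the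
increasing-differences inequality `g (a + u) + g (a + v) ≤ g a + g (a + u + v)` on the nonnegative
orthant. The inequality telescopes in `u` and, by symmetry, in `v`, so it is enough to prove it when
`u` and `v` are nonnegative multiples of coordinate vectors `eᵢ`, `eⱼ`. If `i ≠ j`, then
`(a + u) ⊓ (a + v) = a` and `(a + u) ⊔ (a + v) = a + u + v`, and it is an instance of
supermodularity; if `i = j`, it is convexity along a line.
-/

/-- Increasing differences of `g` in the directions `u` and `v`, at every base point of the
nonnegative orthant. -/
def IncDiff {d : ℕ} (g : (Fin d → ℝ) → ℝ) (u v : Fin d → ℝ) : Prop :=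
  ∀ a : Fin d → ℝ, 0 ≤ a → g (a + u) + g (a + v) ≤ g a + g (a + u + v)

namespace IncDiff

variable {d : ℕ} {g : (Fin d → ℝ) → ℝ}

theorem symm {u v : Fin d → ℝ} (h : IncDiff g u v) : IncDiff g v u := by
  intro a ha
  have := h a ha
  rw [add_right_comm a v u]
  linarith

theorem zero_left (v : Fin d → ℝ) : IncDiff g 0 v := by
  intro a _
  simp

/-- Telescoping: the inequality for `u'` is used at the base point `a + u`. -/
theorem add_left {u u' v : Fin d → ℝ} (hu : 0 ≤ u) (h : IncDiff g u v) (h' : IncDiff g u' v) :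
    IncDiff g (u + u') v := by
  intro a ha
  have h1 := h a ha
  have h2 := h' (a + u) (add_nonneg ha hu)
  rw [← add_assoc a u u']
  linarith

/-- The first direction may be checked one coordinate at a time. -/
theorem of_single {u v : Fin d → ℝ} (hu : 0 ≤ u)
    (h : ∀ i, IncDiff g (Pi.single i (u i)) v) : IncDiff g u v := by
  have key : ∀ s : Finset (Fin d), 0 ≤ ∑ i ∈ s, (Pi.single i (u i) : Fin d → ℝ) ∧
      IncDiff g (∑ i ∈ s, Pi.single i (u i)) v := by
    intro s
    induction s using Finset.induction_on with
    | empty => simpa using zero_left v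
    | insert i s hi ih =>
      rw [Finset.sum_insert hi]
      have h0 : (0 : Fin d → ℝ) ≤ Pi.single i (u i) := Pi.single_nonneg.2 (hu i)
      exact ⟨add_nonneg h0 ih.1, add_left h0 (h i) ih.2⟩
  have := (key Finset.univ).2
  rwa [Finset.univ_sum_single] at this

/-- Two parallel directions: this is convexity of `g` along a line. -/
theorem single_same (hconv : ConvexOn ℝ {z : Fin d → ℝ | 0 ≤ z} g) (i : Fin d) {s t : ℝ}
    (hs : 0 ≤ s) (ht : 0 ≤ t) : IncDiff g (Pi.single i s) (Pi.single i t) := by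
  intro a ha
  rcases hs.eq_or_lt with rfl | hs'
  · simp
  have hst : 0 < s + t := by linarith
  have hb : (0 : Fin d → ℝ) ≤ a + Pi.single i s + Pi.single i t :=
    add_nonneg (add_nonneg ha (Pi.single_nonneg.2 hs)) (Pi.single_nonneg.2 ht)
  -- Both middle points are convex combinations of the endpoints, with swapped weights.
  have h1 := hconv.2 ha hb (show 0 ≤ t / (s + t) by positivity)
    (show 0 ≤ s / (s + t) by positivity) (by field_simp; ring)
  have h2 := hconv.2 ha hb (show 0 ≤ s / (s + t) by positivity)
    (show 0 ≤ t / (s + t) by positivity) (by field_simp)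
  have e1 : (t / (s + t)) • a + (s / (s + t)) • (a + Pi.single i s + Pi.single i t)
      = a + Pi.single i s := by
    ext k
    rcases eq_or_ne k i with rfl | hk
    · simp; field_simp; ring
    · simp [hk]; field_simp; ring
  have e2 : (s / (s + t)) • a + (t / (s + t)) • (a + Pi.single i s + Pi.single i t)
      = a + Pi.single i t := by
    ext k
    rcases eq_or_ne k i with rfl | hk
    · simp; field_simp; ring
    · simp [hk]; field_simp
  rw [e1] at h1
  rw [e2] at h2
  have e3 : t / (s + t) = 1 - s / (s + t) := by field_simp; ring
  simp only [smul_eq_mul, e3] at h1 h2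
  linarith

/-- Distinct coordinate directions: this is supermodularity at the pair `a + u`, `a + v`. -/
theorem single_ne
    (hsup : ∀ x y : Fin d → ℝ, 0 ≤ x → 0 ≤ y → g x + g y ≤ g (x ⊓ y) + g (x ⊔ y))
    {i j : Fin d} (hij : i ≠ j) {s t : ℝ} (hs : 0 ≤ s) (ht : 0 ≤ t) :
    IncDiff g (Pi.single i s) (Pi.single j t) := by
  intro a ha
  have h := hsup (a + Pi.single i s) (a + Pi.single j t)
    (add_nonneg ha (Pi.single_nonneg.2 hs)) (add_nonneg ha (Pi.single_nonneg.2 ht))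
  have e1 : (a + Pi.single i s) ⊓ (a + Pi.single j t) = a := by
    ext k
    rcases eq_or_ne k i with rfl | hk
    · simp [hij, hs]
    · rcases eq_or_ne k j with rfl | hk'
      · simp [hk, ht]
      · simp [hk, hk']
  have e2 : (a + Pi.single i s) ⊔ (a + Pi.single j t) = a + Pi.single i s + Pi.single j t := by
    ext k
    rcases eq_or_ne k i with rfl | hk
    · simp [hij, hs]
    · rcases eq_or_ne k j with rfl | hk'
      · simp [hk, ht]
      · simp [hk, hk']
  rwa [e1, e2] at h

theorem of_convexOn_of_supermodular (hconv : ConvexOn ℝ {z : Fin d → ℝ | 0 ≤ z} g)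
    (hsup : ∀ x y : Fin d → ℝ, 0 ≤ x → 0 ≤ y → g x + g y ≤ g (x ⊓ y) + g (x ⊔ y))
    {u v : Fin d → ℝ} (hu : 0 ≤ u) (hv : 0 ≤ v) : IncDiff g u v := by
  refine of_single hu fun i => (of_single hv fun j => ?_).symm
  rcases eq_or_ne j i with rfl | hji
  · exact single_same hconv j (hv j) (hu j)
  · exact single_ne hsup hji (hv j) (hu i)

end IncDiff

/-- If `g` is differentiable, convex and (continuously) supermodular on the nonnegative
orthant, and item sizes are the nonnegative columns of `S`, then
`h(x) = g(Sx)` is discretely supermodular on `{0,1}ⁿ`. -/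
theorem discrete_supermodular_of_supermodular {d n : ℕ} (g : (Fin d → ℝ) → ℝ)
    (hdiff : Differentiable ℝ g)
    (hconv : ConvexOn ℝ {z : Fin d → ℝ | 0 ≤ z} g)
    (hsup : ∀ x y : Fin d → ℝ, 0 ≤ x → 0 ≤ y → g x + g y ≤ g (x ⊓ y) + g (x ⊔ y))
    (S : Matrix (Fin d) (Fin n) ℝ) (hS : ∀ i j, 0 ≤ S i j) :
    ∀ x y : Fin n → ℝ, (∀ i, x i = 0 ∨ x i = 1) → (∀ i, y i = 0 ∨ y i = 1) →
      g (S.mulVec x) + g (S.mulVec y) ≤ g (S.mulVec (x ⊓ y)) + g (S.mulVec (x ⊔ y)) := by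
  intro x y hx hy
  have hmul : ∀ z : Fin n → ℝ, 0 ≤ z → 0 ≤ S.mulVec z := fun z hz i =>
    Finset.sum_nonneg (s := Finset.univ) (f := fun j => S i j * z j)
      fun j _ => mul_nonneg (hS i j) (hz j)
  have hx0 : 0 ≤ x := fun i => by rcases hx i with h | h <;> simp [h]
  have hy0 : 0 ≤ y := fun i => by rcases hy i with h | h <;> simp [h]
  have h := IncDiff.of_convexOn_of_supermodular hconv hsup
    (hmul (x - x ⊓ y) (sub_nonneg.2 inf_le_left)) (hmul (y - x ⊓ y) (sub_nonneg.2 inf_le_right))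
    (S.mulVec (x ⊓ y)) (hmul _ (le_inf hx0 hy0))
  have e : x ⊓ y + (x - x ⊓ y) + (y - x ⊓ y) = x ⊔ y := by
    rw [add_sub_cancel, ← add_sub_assoc, ← inf_add_sup x y, add_sub_cancel_left]
  rwa [← Matrix.mulVec_add, ← Matrix.mulVec_add, ← Matrix.mulVec_add, e, add_sub_cancel,
    add_sub_cancel] at h
end

section
/- Let g : ℝ^d≥0 → ℝ be convex and differentiable, and let λ ∈ ℝ^d≥0. Let x ∈ {0,1}^n be the indicator vector of the set of items picked by λ, i.e., x_i = 1 if and only if v_i ≥ ⟨λ, S^i⟩. If λ = ∇g(Sx), then x is an optimal solution to the unconstrained problem: π(x) ≥ π(x') for every x' ∈ [0,1]^n. -/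
/-- The `i`-th coordinate of the gradient of `g` at `x`. -/
noncomputable def grad {d : ℕ} (g : (Fin d → ℝ) → ℝ) (x : Fin d → ℝ) (i : Fin d) : ℝ :=
  fderiv ℝ g x (Pi.single i 1)

/-- Gradient inequality: a differentiable function that is convex on `s` lies, on `s`, above each
of its tangent hyperplanes at points of `s`, even at boundary points. -/
lemma ConvexOn.add_fderiv_sub_le {d : ℕ} {g : (Fin d → ℝ) → ℝ} {s : Set (Fin d → ℝ)}
    (hconv : ConvexOn ℝ s g) (hdiff : Differentiable ℝ g) {z w : Fin d → ℝ}
    (hz : z ∈ s) (hw : w ∈ s) : g z + fderiv ℝ g z (w - z) ≤ g w := by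
  -- Restrict `g` to the line through `z` and `w`, and compare slope and derivative at `0`.
  have hc := hconv.comp_affineMap (AffineMap.lineMap z w : ℝ →ᵃ[ℝ] (Fin d → ℝ))
  have hd : HasDerivAt (g ∘ (AffineMap.lineMap z w : ℝ →ᵃ[ℝ] (Fin d → ℝ)))
      (fderiv ℝ g z (w - z)) 0 := by
    refine HasFDerivAt.comp_hasDerivAt (0 : ℝ) ?_ AffineMap.hasDerivAt_lineMap
    simpa using (hdiff z).hasFDerivAt
  have h := hc.le_slope_of_hasDerivAt (x := 0) (y := 1) (by simpa using hz) (by simpa using hw)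
    one_pos hd
  simp only [slope_def_field, Function.comp_apply, AffineMap.lineMap_apply_one,
    AffineMap.lineMap_apply_zero, sub_zero, div_one] at h
  linarith

/-- The Fréchet derivative of `g` acts as the dot product with the gradient; no differentiability
is needed, since only linearity of `fderiv` is used. -/
lemma fderiv_apply_eq_sum_grad {d : ℕ} (g : (Fin d → ℝ) → ℝ) (z u : Fin d → ℝ) :
    fderiv ℝ g z u = ∑ j, grad g z j * u j := by
  conv_lhs => rw [pi_eq_sum_univ' u]
  simp [grad, map_sum, mul_comm]

/-- If `x` is the indicator of the items picked by classifier `λ`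
(`x_i = 1` iff `v_i ≥ ⟨λ, S^i⟩`) and `λ = ∇g(Sx)`, then `x` is optimal for the
unconstrained problem. -/
theorem classifier_optimal {d n : ℕ} (g : (Fin d → ℝ) → ℝ)
    (hconv : ConvexOn ℝ {z : Fin d → ℝ | 0 ≤ z} g)
    (hdiff : Differentiable ℝ g)
    (v : Fin n → ℝ) (hv : 0 ≤ v)
    (S : Matrix (Fin d) (Fin n) ℝ) (hS : ∀ i j, 0 ≤ S i j)
    (lam : Fin d → ℝ) (hlam : 0 ≤ lam)
    (x : Fin n → ℝ)
    (hxdef : ∀ i, x i = if (∑ j, lam j * S j i) ≤ v i then 1 else 0)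
    (hgrad : ∀ j, lam j = grad g (S.mulVec x) j) :
    ∀ x' : Fin n → ℝ, (∀ i, x' i ∈ Set.Icc (0 : ℝ) 1) →
      profit v S g x' ≤ profit v S g x := by
  intro x' hx'
  have hnn : ∀ y : Fin n → ℝ, (∀ i, 0 ≤ y i) → S.mulVec y ∈ {z : Fin d → ℝ | 0 ≤ z} :=
    fun y hy j => by
      simpa [Matrix.mulVec, dotProduct] using
        Finset.sum_nonneg fun i (_ : i ∈ Finset.univ) => mul_nonneg (hS j i) (hy i)
  have hx : ∀ i, 0 ≤ x i := fun i => by rw [hxdef i]; split_ifs <;> norm_num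
  have hkey := hconv.add_fderiv_sub_le hdiff (hnn x hx) (hnn x' fun i => (hx' i).1)
  have hlin : fderiv ℝ g (S.mulVec x) (S.mulVec x' - S.mulVec x)
      = ∑ i, (∑ j, lam j * S j i) * (x' i - x i) := by
    rw [fderiv_apply_eq_sum_grad, ← Matrix.mulVec_sub]
    simp only [← hgrad, Matrix.mulVec, dotProduct, Finset.mul_sum, Finset.sum_mul, Pi.sub_apply]
    rw [Finset.sum_comm]
    simp only [mul_assoc]
  have hterm : ∑ i, v i * x' i - ∑ i, v i * x i
      ≤ ∑ i, (∑ j, lam j * S j i) * (x' i - x i) := by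
    rw [← Finset.sum_sub_distrib]
    refine Finset.sum_le_sum fun i _ => ?_
    obtain ⟨h0, h1⟩ := hx' i
    rw [hxdef i]
    split_ifs with h
    · nlinarith
    · nlinarith
  unfold profit
  linarith
end

section
/- Let g : ℝ^d≥0 → ℝ≥0 be convex and differentiable with g(0) = 0, and let λ ∈ ℝ^d≥0. Suppose x ∈ {0,1}^n satisfies: x_i = 1 only if v_i ≥ ⟨λ, S^i⟩; ∇g(Sx) ≤ λ componentwise; and (∇g(Sx))_{i*} = λ_{i*} for some coordinate i*. Then π(x) ≥ g*_{i*}(λ_{i*}). -/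
/-- Fenchel conjugate of a one-dimensional function over `ℝ≥0`. -/
noncomputable def conj1 (f : ℝ → ℝ) (u : ℝ) : ℝ :=
  sSup {r : ℝ | ∃ t : ℝ, 0 ≤ t ∧ r = u * t - f t}

/-- The `i`-th marginal of `g`: `g_i(t) = g(t·e_i)`. -/
noncomputable def marg {d : ℕ} (g : (Fin d → ℝ) → ℝ) (i : Fin d) (t : ℝ) : ℝ :=
  g (t • (Pi.single i 1 : Fin d → ℝ))

/-- First-order characterization of convexity, obtained by restricting `g` to the segment from `z`
to `y`. -/
lemma ConvexOn.add_fderiv_sub_le_s10 {E : Type*} [NormedAddCommGroup E] [NormedSpace ℝ E] {s : Set E}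
    {g : E → ℝ} (hg : ConvexOn ℝ s g) {z y : E} (hz : z ∈ s) (hy : y ∈ s)
    (hd : DifferentiableAt ℝ g z) : g z + fderiv ℝ g z (y - z) ≤ g y := by
  have hc := hg.comp_affineMap (AffineMap.lineMap z y : ℝ →ᵃ[ℝ] E)
  have hder : HasDerivAt (g ∘ (AffineMap.lineMap z y : ℝ →ᵃ[ℝ] E)) (fderiv ℝ g z (y - z)) 0 := by
    have hd' : HasFDerivAt g (fderiv ℝ g z) ((AffineMap.lineMap z y : ℝ →ᵃ[ℝ] E) 0) := by
      simpa using hd.hasFDerivAt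
    exact hd'.comp_hasDerivAt 0 AffineMap.hasDerivAt_lineMap
  have h := hc.le_slope_of_hasDerivAt (x := 0) (y := 1) (by simpa using hz) (by simpa using hy)
    one_pos hder
  simp only [slope_def_field, Function.comp_apply, AffineMap.lineMap_apply_one,
    AffineMap.lineMap_apply_zero, sub_zero, div_one] at h
  linarith

lemma fderiv_eq_sum_grad {d : ℕ} (g : (Fin d → ℝ) → ℝ) (z w : Fin d → ℝ) :
    fderiv ℝ g z w = ∑ j, grad g z j * w j := by
  conv_lhs => rw [pi_eq_sum_univ' w, map_sum]
  refine Finset.sum_congr rfl fun j _ => ?_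
  rw [map_smul, smul_eq_mul, mul_comm, grad]

/-- If a 0/1 vector `x` only picks items with `v_i ≥ ⟨λ, S^i⟩`, has `∇g(Sx) ≤ λ`
componentwise and `(∇g(Sx))_{i*} = λ_{i*}` for some coordinate `i*`, then
`π(x) ≥ g*_{i*}(λ_{i*})`. -/
theorem profit_ge_marginal_conj {d n : ℕ} (g : (Fin d → ℝ) → ℝ)
    (hconv : ConvexOn ℝ {z : Fin d → ℝ | 0 ≤ z} g)
    (hdiff : Differentiable ℝ g)
    (hg0 : g 0 = 0) (hgnn : ∀ z : Fin d → ℝ, 0 ≤ z → 0 ≤ g z)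
    (v : Fin n → ℝ) (hv : 0 ≤ v)
    (S : Matrix (Fin d) (Fin n) ℝ) (hS : ∀ i j, 0 ≤ S i j)
    (lam : Fin d → ℝ) (hlam : 0 ≤ lam)
    (x : Fin n → ℝ) (hxbin : ∀ i, x i = 0 ∨ x i = 1)
    (hpick : ∀ i, x i = 1 → (∑ j, lam j * S j i) ≤ v i)
    (hgrad : ∀ j, grad g (S.mulVec x) j ≤ lam j)
    (istar : Fin d) (heq : grad g (S.mulVec x) istar = lam istar) :
    conj1 (marg g istar) (lam istar) ≤ profit v S g x := by
  have hx0 : ∀ i, 0 ≤ x i := fun i => by rcases hxbin i with h | h <;> simp [h]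
  unfold profit
  set z := S.mulVec x with hz
  have hz0 : 0 ≤ z := fun j => by
    simp only [hz, Matrix.mulVec, dotProduct]
    exact Finset.sum_nonneg fun i _ => mul_nonneg (hS j i) (hx0 i)
  have hvalue : ∑ j, lam j * z j ≤ ∑ i, v i * x i := by
    calc ∑ j, lam j * z j = ∑ i, (∑ j, lam j * S j i) * x i := by
          simp only [hz, Matrix.mulVec, dotProduct, Finset.mul_sum, Finset.sum_mul, mul_assoc]
          exact Finset.sum_comm
      _ ≤ ∑ i, v i * x i := by
          refine Finset.sum_le_sum fun i _ => ?_
          rcases hxbin i with h | h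
          · simp [h]
          · simpa [h] using hpick i h
  have hgz : fderiv ℝ g z z ≤ ∑ j, lam j * z j := by
    rw [fderiv_eq_sum_grad]
    exact Finset.sum_le_sum fun j _ => mul_le_mul_of_nonneg_right (hgrad j) (hz0 j)
  refine csSup_le ⟨_, 0, le_rfl, rfl⟩ ?_
  rintro r ⟨t, ht, rfl⟩
  have hy : (0 : Fin d → ℝ) ≤ t • Pi.single istar 1 :=
    smul_nonneg ht (Pi.single_nonneg.2 zero_le_one)
  have htan := hconv.add_fderiv_sub_le_s10 hz0 hy (hdiff z)
  have hstar : fderiv ℝ g z (Pi.single istar 1) = lam istar := heq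
  rw [map_sub, map_smul, hstar, smul_eq_mul] at htan
  unfold marg
  linarith
end

section
/- Let g : ℝ^d≥0 → ℝ be separable, g(z) = ∑_{i=1}^d g_i(z_i), with each g_i : ℝ≥0 → ℝ convex, differentiable, closed, and satisfying g_i(0) = 0. Let ℱ ⊆ {0,1}^n be downward closed and let λ* ∈ ℝ^d≥0 be such that every x ∈ ℱ with support contained in U°_{λ*} satisfies ∇g(Sx) ≤ λ* componentwise. Then there exists a set function π⁺ on the subsets of U°_{λ*} such that: (i) π⁺ is submodular; (ii) π⁺ is nonnegative and monotone nondecreasing (under inclusion) over all subsets of U°_{λ*}; and (iii) π⁺(A) = π(χ_A) for every A ⊆ U°_{λ*} with χ_A ∈ ℱ. -/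
/-- The indicator vector of a finite set `A` of items. -/
noncomputable def indic {n : ℕ} (A : Finset (Fin n)) : Fin n → ℝ :=
  fun i => if i ∈ A then 1 else 0

/-- Among two pairs with equal sums, a convex function has the larger sum on the outer pair. -/
lemma ConvexOn.four_point {f : ℝ → ℝ} {s : Set ℝ} (hf : ConvexOn ℝ s f) {a b c e : ℝ}
    (ha : a ∈ s) (he : e ∈ s) (hab : a ≤ b) (hac : a ≤ c) (hsum : b + c = e + a) :
    f b + f c ≤ f e + f a := by
  rcases eq_or_lt_of_le (show a ≤ e by linarith) with h | h
  · obtain rfl : b = a := by linarith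
    obtain rfl : c = b := by linarith
    rw [h]
  · have hpos : 0 < e - a := sub_pos.2 h
    have hne : e - a ≠ 0 := hpos.ne.symm
    -- `b` and `c` are the convex combinations of `a`, `e` with swapped weights
    have h1 := hf.2 ha he (div_nonneg (by linarith : 0 ≤ e - b) hpos.le)
      (div_nonneg (by linarith : 0 ≤ b - a) hpos.le) (by field_simp; ring)
    have h2 := hf.2 ha he (div_nonneg (by linarith : 0 ≤ b - a) hpos.le)
      (div_nonneg (by linarith : 0 ≤ e - b) hpos.le) (by field_simp; ring)
    have e1 : ((e - b) / (e - a)) • a + ((b - a) / (e - a)) • e = b := by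
      simp only [smul_eq_mul]; field_simp; ring
    have e2 : ((b - a) / (e - a)) • a + ((e - b) / (e - a)) • e = c := by
      obtain rfl : c = e + a - b := by linarith
      simp only [smul_eq_mul]; field_simp; ring
    rw [e1] at h1
    rw [e2] at h2
    have hw : (e - b) / (e - a) + (b - a) / (e - a) = 1 := by field_simp; ring
    simp only [smul_eq_mul] at h1 h2
    calc f b + f c ≤ ((e - b) / (e - a) + (b - a) / (e - a)) * (f e + f a) := by linarith
      _ = f e + f a := by rw [hw, one_mul]

/-- A convex function on `[0, ∞)` is nonincreasing to the left of a point where its derivative is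
nonpositive. -/
lemma ConvexOn.antitoneOn_Icc_of_deriv_nonpos {k : ℝ → ℝ} {m : ℝ}
    (hk : ConvexOn ℝ (Set.Ici 0) k) (hd : DifferentiableAt ℝ k m) (hm : deriv k m ≤ 0) :
    AntitoneOn k (Set.Icc 0 m) := by
  intro x hx y hy hxy
  have h0m : 0 ≤ m := hx.1.trans hx.2
  have hkm : k m ≤ k x := by
    rcases eq_or_lt_of_le hx.2 with h | h
    · rw [h]
    · have h1 := (hk.slope_le_deriv (x := x) (y := m) hx.1 h0m h hd).trans hm
      rw [slope_def_field, div_le_iff₀ (sub_pos.2 h)] at h1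
      linarith
  have h2 := hk.le_max_of_mem_Icc (x := x) (y := m) (z := y) hx.1 h0m ⟨hxy, hy.2⟩
  rwa [max_eq_left hkm] at h2

lemma AntitoneOn.comp_min {k : ℝ → ℝ} {m : ℝ} (hm : 0 ≤ m) (hk : AntitoneOn k (Set.Icc 0 m)) :
    AntitoneOn (fun z => k (min z m)) (Set.Ici 0) := fun _ hx _ hy hxy =>
  hk ⟨le_min hx hm, min_le_right _ _⟩ ⟨le_min hy hm, min_le_right _ _⟩ (min_le_min_right _ hxy)

lemma ConvexOn.comp_min {k : ℝ → ℝ} {m : ℝ} (hm : 0 ≤ m) (hk : ConvexOn ℝ (Set.Ici 0) k)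
    (ha : AntitoneOn k (Set.Icc 0 m)) : ConvexOn ℝ (Set.Ici 0) (fun z => k (min z m)) := by
  have himg : (fun z : ℝ => min z m) '' Set.Ici 0 = Set.Icc 0 m := by
    ext y
    constructor
    · rintro ⟨x, hx, rfl⟩
      exact ⟨le_min hx hm, min_le_right _ _⟩
    · intro hy
      exact ⟨y, hy.1, min_eq_left hy.2⟩
  have hmin : ConcaveOn ℝ (Set.Ici (0 : ℝ)) (fun z : ℝ => min z m) :=
    (concaveOn_id (convex_Ici 0)).inf (concaveOn_const m (convex_Ici 0))
  refine ConvexOn.comp_concaveOn (g := k) (f := fun z : ℝ => min z m) ?_ hmin ?_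
  · rw [himg]
    exact hk.subset (fun x hx => hx.1) (convex_Icc 0 m)
  · rwa [himg]

lemma mulVec_indic {d n : ℕ} (S : Matrix (Fin d) (Fin n) ℝ) (A : Finset (Fin n)) (j : Fin d) :
    S.mulVec (indic A) j = ∑ i ∈ A, S j i := by
  simp [Matrix.mulVec, dotProduct, indic]

/-- Non-negativization of the profit function for separable costs: there is a submodular
set function `π⁺` on subsets of `U°_{λ*}` which is nonnegative and monotone there, and
which agrees with the profit `π` on the feasible subsets of `U°_{λ*}`. -/
theorem nonneg_submodular_surrogate {d n : ℕ} (gi : Fin d → ℝ → ℝ)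
    (hconv : ∀ i, ConvexOn ℝ (Set.Ici (0 : ℝ)) (gi i))
    (hdiff : ∀ i, Differentiable ℝ (gi i))
    (hclosed : ∀ i, IsClosed {p : ℝ × ℝ | gi i p.1 ≤ p.2})
    (hgi0 : ∀ i, gi i 0 = 0)
    (g : (Fin d → ℝ) → ℝ) (hgdef : ∀ z, g z = ∑ i, gi i (z i))
    (v : Fin n → ℝ) (hv : 0 ≤ v)
    (S : Matrix (Fin d) (Fin n) ℝ) (hS : ∀ i j, 0 ≤ S i j)
    (F : Set (Fin n → ℝ))
    (hFbin : ∀ x ∈ F, ∀ i, x i = 0 ∨ x i = 1)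
    (hFdc : ∀ x ∈ F, ∀ y : Fin n → ℝ, (∀ i, y i = 0 ∨ y i = 1) → y ≤ x → y ∈ F)
    (lam : Fin d → ℝ) (hlam : 0 ≤ lam)
    -- every feasible solution supported on `U°_{λ*}` satisfies `∇g(Sx) ≤ λ*`
    (hP1 : ∀ x ∈ F, (∀ i, x i ≠ 0 → (∑ j, lam j * S j i) < v i) →
      ∀ j, deriv (gi j) (S.mulVec x j) ≤ lam j) :
    ∃ p : Finset (Fin n) → ℝ,
      -- (i) submodular on subsets of `U°_{λ*}`
      (∀ A B : Finset (Fin n),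
          (∀ i ∈ A, (∑ j, lam j * S j i) < v i) →
          (∀ i ∈ B, (∑ j, lam j * S j i) < v i) →
          p (A ∪ B) + p (A ∩ B) ≤ p A + p B) ∧
      -- (ii) nonnegative and monotone on subsets of `U°_{λ*}`
      (∀ A : Finset (Fin n), (∀ i ∈ A, (∑ j, lam j * S j i) < v i) → 0 ≤ p A) ∧
      (∀ A B : Finset (Fin n), A ⊆ B →
          (∀ i ∈ B, (∑ j, lam j * S j i) < v i) → p A ≤ p B) ∧
      -- (iii) agrees with the profit on feasible subsets of `U°_{λ*}`
      (∀ A : Finset (Fin n), (∀ i ∈ A, (∑ j, lam j * S j i) < v i) →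
          indic A ∈ F → p A = profit v S g (indic A)) := by
  classical
  by_cases hne : ∃ A : Finset (Fin n), (∀ i ∈ A, (∑ j, lam j * S j i) < v i) ∧ indic A ∈ F
  swap
  · refine ⟨fun _ => 0, by simp, by simp, by simp, fun A hA hF => (hne ⟨A, hA, hF⟩).elim⟩
  obtain ⟨A₀, hA₀⟩ := hne
  set z : Fin d → Finset (Fin n) → ℝ := fun j A => ∑ i ∈ A, S j i with hz
  have hz0 : ∀ j A, 0 ≤ z j A := fun j A => Finset.sum_nonneg fun i _ => hS j i
  have hzmono : ∀ j A B, A ⊆ B → z j A ≤ z j B := fun j A B h =>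
    Finset.sum_le_sum_of_subset_of_nonneg h fun i _ _ => hS j i
  set P : Finset (Finset (Fin n)) := Finset.univ.filter fun A =>
    (∀ i ∈ A, (∑ j, lam j * S j i) < v i) ∧ indic A ∈ F with hP
  have hmax : ∀ j, ∃ M ∈ P, ∀ A ∈ P, z j A ≤ z j M := fun j =>
    Finset.exists_max_image P (z j) ⟨A₀, by simpa [hP] using hA₀⟩
  choose M hMP hMmax using hmax
  set m : Fin d → ℝ := fun j => z j (M j) with hm
  have hm0 : ∀ j, 0 ≤ m j := fun j => hz0 j _
  have hder : ∀ j, deriv (gi j) (m j) ≤ lam j := by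
    intro j
    have hj := hMP j
    simp only [hP, Finset.mem_filter, Finset.mem_univ, true_and] at hj
    have h := hP1 _ hj.2 (fun i hi => hj.1 i (by
      by_contra hc
      exact hi (by simp [indic, hc]))) j
    rwa [mulVec_indic] at h
  set k : Fin d → ℝ → ℝ := fun j t => gi j t - lam j * t with hk
  have hkconv : ∀ j, ConvexOn ℝ (Set.Ici 0) (k j) := fun j =>
    (hconv j).sub ((concaveOn_id (convex_Ici 0)).smul (hlam j))
  have hkder : ∀ j, HasDerivAt (k j) (deriv (gi j) (m j) - lam j) (m j) := fun j => by
    have h := ((hdiff j (m j)).hasDerivAt).sub ((hasDerivAt_id (m j)).const_mul (lam j))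
    rw [mul_one] at h
    exact h
  have hkanti : ∀ j, AntitoneOn (k j) (Set.Icc 0 (m j)) := fun j =>
    (hkconv j).antitoneOn_Icc_of_deriv_nonpos (hkder j).differentiableAt
      (by rw [(hkder j).deriv]; linarith [hder j])
  set w : Fin n → ℝ := fun i => v i - ∑ j, lam j * S j i with hw
  set p : Finset (Fin n) → ℝ := fun A => ∑ i ∈ A, w i - ∑ j, k j (min (z j A) (m j)) with hp
  have hmono : ∀ A B : Finset (Fin n), A ⊆ B →
      (∀ i ∈ B, (∑ j, lam j * S j i) < v i) → p A ≤ p B := by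
    intro A B hAB hB
    have h1 : ∑ i ∈ A, w i ≤ ∑ i ∈ B, w i :=
      Finset.sum_le_sum_of_subset_of_nonneg hAB fun i hi _ => by
        simp only [hw]; linarith [hB i hi]
    have h2 : ∑ j, k j (min (z j B) (m j)) ≤ ∑ j, k j (min (z j A) (m j)) :=
      Finset.sum_le_sum fun j _ =>
        (hkanti j).comp_min (hm0 j) (hz0 j A) (hz0 j B) (hzmono j A B hAB)
    simp only [hp]
    linarith
  have hempty : p ∅ = 0 := by
    simp [hp, hz, hk, min_eq_left (hm0 _), hgi0]
  refine ⟨p, ?_, fun A hA => hempty ▸ hmono ∅ A (Finset.empty_subset A) hA, hmono, ?_⟩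
  · intro A B _ _
    have h1 : ∑ i ∈ A ∪ B, w i + ∑ i ∈ A ∩ B, w i = ∑ i ∈ A, w i + ∑ i ∈ B, w i :=
      Finset.sum_union_inter
    have h2 : ∑ j, k j (min (z j A) (m j)) + ∑ j, k j (min (z j B) (m j)) ≤
        ∑ j, k j (min (z j (A ∪ B)) (m j)) + ∑ j, k j (min (z j (A ∩ B)) (m j)) := by
      rw [← Finset.sum_add_distrib, ← Finset.sum_add_distrib]
      refine Finset.sum_le_sum fun j _ => ?_
      exact ((hkconv j).comp_min (hm0 j) (hkanti j)).four_point (hz0 j _) (hz0 j _)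
        (hzmono j _ _ Finset.inter_subset_left) (hzmono j _ _ Finset.inter_subset_right)
        Finset.sum_union_inter.symm
    simp only [hp]
    linarith
  · intro A hA hF
    have hle : ∀ j, z j A ≤ m j := fun j => hMmax j A (by simp [hP, hF]; exact hA)
    have hswap : ∑ i ∈ A, ∑ j, lam j * S j i = ∑ j, lam j * z j A := by
      rw [Finset.sum_comm]
      simp [hz, Finset.mul_sum]
    have hval : ∑ i, v i * indic A i = ∑ i ∈ A, v i := by simp [indic]
    simp only [hp, profit, hgdef, mulVec_indic, hval, min_eq_left (hle _), hw, hk,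
      Finset.sum_sub_distrib, hswap]
    simp only [hz]
    ring
end
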